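/- arXiv:2310.06427 — 10 statements merged into one kernel-verified Lean document; each statement's English description precedes it below -/
import Mathlib

section
/- Let E be a real normed vector space, Δt > 0, c₁, c₂ ≥ 0, T ∈ ℕ. Let p^f, ṗ^f, p^g, ṗ^g : ℕ → E be sequences such that for all j < T: ‖p^f(j+1) − p^f(j) − Δt • ṗ^f(j)‖ ≤ c₂·Δt², ‖p^g(j+1) − p^g(j) − Δt • ṗ^g(j)‖ ≤ c₂·Δt², ‖ṗ^f(j+1) − ṗ^f(j)‖ ≤ c₁·Δt, ‖ṗ^g(j+1) − ṗ^g(j)‖ ≤ c₁·Δt, and such that p^f(0) = p^g(0) and ṗ^f(0) = ṗ^g(0). Then for all k ≤ T, ‖p^f(k) − p^g(k)‖ ≤ (c₁·k² + 2·c₂·k)·Δt². -/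
/-! The gap between the momentum derivatives grows by at most `2 * c₁ * Δt` per step, so it is at
most `2 * c₁ * k * Δt` after `k` steps. Hence step `k` increases the momentum gap by at most
`(2 * c₁ * k + 2 * c₂) * Δt ^ 2`, and summing over the steps gives the bound because
`∑ j < k, 2 * j = k * (k - 1) ≤ k ^ 2`. Both estimates are carried through one induction. -/

/-- Momentum error bound for the forward trajectory against the ground truth:
if both trajectories satisfy first-order Taylor expansions of the momentum with
remainder at most `c₂·Δt²` and momentum-derivative increments at most `c₁·Δt`,
and they share initial momentum and momentum derivative, then
`‖p^f(k) − p^g(k)‖ ≤ (c₁·k² + 2·c₂·k)·Δt²` for all `k ≤ T`. -/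
theorem momentum_error_bound {E : Type*} [NormedAddCommGroup E] [NormedSpace ℝ E]
    (Δt : ℝ) (hΔt : 0 < Δt) (c₁ c₂ : ℝ) (hc₁ : 0 ≤ c₁) (hc₂ : 0 ≤ c₂) (T : ℕ)
    (pf pdotf pg pdotg : ℕ → E)
    (hpf : ∀ j < T, ‖pf (j + 1) - pf j - Δt • pdotf j‖ ≤ c₂ * Δt ^ 2)
    (hpg : ∀ j < T, ‖pg (j + 1) - pg j - Δt • pdotg j‖ ≤ c₂ * Δt ^ 2)
    (hpdotf : ∀ j < T, ‖pdotf (j + 1) - pdotf j‖ ≤ c₁ * Δt)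
    (hpdotg : ∀ j < T, ‖pdotg (j + 1) - pdotg j‖ ≤ c₁ * Δt)
    (h0p : pf 0 = pg 0) (h0pdot : pdotf 0 = pdotg 0) :
    ∀ k ≤ T, ‖pf k - pg k‖ ≤ (c₁ * (k : ℝ) ^ 2 + 2 * c₂ * k) * Δt ^ 2 := by
  have key : ∀ k ≤ T, ‖pdotf k - pdotg k‖ ≤ 2 * c₁ * k * Δt ∧
      ‖pf k - pg k‖ ≤ (c₁ * (k : ℝ) ^ 2 + 2 * c₂ * k) * Δt ^ 2 := by
    intro k
    induction k with
    | zero => intro _; simp [h0p, h0pdot]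
    | succ k ih =>
      intro hk
      have hkT : k < T := hk
      obtain ⟨hd, hp⟩ := ih hkT.le
      have hsd : ‖pdotf (k + 1) - pdotg (k + 1)‖ ≤ ‖pdotf k - pdotg k‖
          + ‖pdotf (k + 1) - pdotf k‖ + ‖pdotg (k + 1) - pdotg k‖ := by
        rw [show pdotf (k + 1) - pdotg (k + 1) = (pdotf k - pdotg k)
          + (pdotf (k + 1) - pdotf k) - (pdotg (k + 1) - pdotg k) by abel]
        exact (norm_sub_le _ _).trans (add_le_add_left (norm_add_le _ _) _)
      have hsp : ‖pf (k + 1) - pg (k + 1)‖ ≤ ‖pf k - pg k‖ + Δt * ‖pdotf k - pdotg k‖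
          + ‖pf (k + 1) - pf k - Δt • pdotf k‖ + ‖pg (k + 1) - pg k - Δt • pdotg k‖ := by
        rw [show pf (k + 1) - pg (k + 1) = (pf k - pg k) + Δt • (pdotf k - pdotg k)
          + (pf (k + 1) - pf k - Δt • pdotf k) - (pg (k + 1) - pg k - Δt • pdotg k) by
            rw [smul_sub]; abel,
          ← norm_smul_of_nonneg hΔt.le]
        exact (norm_sub_le _ _).trans (add_le_add_left norm_add₃_le _)
      have hmul := mul_le_mul_of_nonneg_left hd hΔt.le
      have hslack : 0 ≤ c₁ * Δt ^ 2 := by positivity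
      push_cast
      constructor
      · linarith [hpdotf k hkT, hpdotg k hkT]
      · linarith [hpf k hkT, hpg k hkT]
  exact fun k hk => (key k hk).2
end

section
/- Let E be a real normed vector space, Δt > 0, m > 0, c₁, c₂, c₃ ≥ 0, T ∈ ℕ. Let q^f, p^f, ṗ^f, q^g, p^g, ṗ^g : ℕ → E be sequences such that for all j < T: ‖q^f(j+1) − q^f(j) − (Δt/m) • p^f(j) − (Δt²/(2m)) • ṗ^f(j)‖ ≤ c₃·Δt³ and likewise for (q^g, p^g, ṗ^g); ‖p^f(j+1) − p^f(j) − Δt • ṗ^f(j)‖ ≤ c₂·Δt² and likewise for (p^g, ṗ^g); ‖ṗ^f(j+1) − ṗ^f(j)‖ ≤ c₁·Δt and likewise for ṗ^g; and such that q^f(0) = q^g(0), p^f(0) = p^g(0), ṗ^f(0) = ṗ^g(0). Then for all k ≤ T, ‖q^f(k) − q^g(k)‖ ≤ ((c₁/(3m))·k³ + ((c₁ + 2c₂)/(2m))·k² + 2·c₃·k)·Δt³. -/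
/-!
Let `D`, `P`, `Q` be the norms of the differences of the two trajectories in momentum derivative,
momentum and position. Subtracting the Taylor expansions of the two trajectories
(`norm_sub_le_of_steps`) yields the coupled recursions `D (j+1) ≤ D j + 2 c₁ Δt`,
`P (j+1) ≤ P j + Δt D j + 2 c₂ Δt²` and
`Q (j+1) ≤ Q j + (Δt / m) P j + (Δt² / (2 m)) D j + 2 c₃ Δt³`, all starting from zero.
Summing them successively gives `D k ≤ 2 c₁ k Δt`, then `P k ≤ (c₁ k (k - 1) + 2 c₂ k) Δt²`, and
then increments of `Q` of at most `((c₁ k² + 2 c₂ k) / m + 2 c₃) Δt³`, which are dominated by the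
increments of the claimed cubic polynomial.
-/

/-- One step of error propagation: if `x'` and `y'` are reached from `x` and `y` by the increments
`v` and `w`, each up to an error `ε`, then the distance grows by at most `‖v - w‖ + 2 * ε`. -/
lemma norm_sub_le_of_steps {E : Type*} [NormedAddCommGroup E] {x x' v y y' w : E} {ε : ℝ}
    (hx : ‖x' - x - v‖ ≤ ε) (hy : ‖y' - y - w‖ ≤ ε) :
    ‖x' - y'‖ ≤ ‖x - y‖ + ‖v - w‖ + 2 * ε := by
  have h : x' - y' = (x - y) + (v - w) + ((x' - x - v) - (y' - y - w)) := by abel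
  rw [h]
  have h₁ := norm_add₃_le (a := x - y) (b := v - w) (c := (x' - x - v) - (y' - y - w))
  have h₂ := norm_sub_le (x' - x - v) (y' - y - w)
  linarith

/-- Position error bound for the forward trajectory against the ground truth:
if both trajectories satisfy second-order Taylor expansions of the position with
remainder at most `c₃·Δt³`, first-order expansions of the momentum with remainder
at most `c₂·Δt²`, momentum-derivative increments at most `c₁·Δt`, and share
initial position, momentum and momentum derivative, then
`‖q^f(k) − q^g(k)‖ ≤ ((c₁/(3m))·k³ + ((c₁+2c₂)/(2m))·k² + 2·c₃·k)·Δt³` for all `k ≤ T`. -/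
theorem position_error_bound {E : Type*} [NormedAddCommGroup E] [NormedSpace ℝ E]
    (Δt : ℝ) (hΔt : 0 < Δt) (m : ℝ) (hm : 0 < m)
    (c₁ c₂ c₃ : ℝ) (hc₁ : 0 ≤ c₁) (hc₂ : 0 ≤ c₂) (hc₃ : 0 ≤ c₃) (T : ℕ)
    (qf pf pdotf qg pg pdotg : ℕ → E)
    (hqf : ∀ j < T,
      ‖qf (j + 1) - qf j - (Δt / m) • pf j - (Δt ^ 2 / (2 * m)) • pdotf j‖ ≤ c₃ * Δt ^ 3)
    (hqg : ∀ j < T,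
      ‖qg (j + 1) - qg j - (Δt / m) • pg j - (Δt ^ 2 / (2 * m)) • pdotg j‖ ≤ c₃ * Δt ^ 3)
    (hpf : ∀ j < T, ‖pf (j + 1) - pf j - Δt • pdotf j‖ ≤ c₂ * Δt ^ 2)
    (hpg : ∀ j < T, ‖pg (j + 1) - pg j - Δt • pdotg j‖ ≤ c₂ * Δt ^ 2)
    (hpdotf : ∀ j < T, ‖pdotf (j + 1) - pdotf j‖ ≤ c₁ * Δt)
    (hpdotg : ∀ j < T, ‖pdotg (j + 1) - pdotg j‖ ≤ c₁ * Δt)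
    (h0q : qf 0 = qg 0) (h0p : pf 0 = pg 0) (h0pdot : pdotf 0 = pdotg 0) :
    ∀ k ≤ T, ‖qf k - qg k‖ ≤
      ((c₁ / (3 * m)) * (k : ℝ) ^ 3 + ((c₁ + 2 * c₂) / (2 * m)) * (k : ℝ) ^ 2
        + 2 * c₃ * k) * Δt ^ 3 := by
  have hD : ∀ k ≤ T, ‖pdotf k - pdotg k‖ ≤ 2 * c₁ * k * Δt := by
    intro k
    induction k with
    | zero => intro _; simp [h0pdot]
    | succ j ih =>
      intro hj
      have h := norm_sub_le_of_steps (v := (0 : E)) (w := (0 : E))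
        ((sub_zero (pdotf (j + 1) - pdotf j)).symm ▸ hpdotf j hj)
        ((sub_zero (pdotg (j + 1) - pdotg j)).symm ▸ hpdotg j hj)
      have hi := ih (by omega)
      rw [sub_zero, norm_zero] at h
      push_cast
      linarith
  have hP : ∀ k ≤ T, ‖pf k - pg k‖ ≤ (c₁ * k * (k - 1) + 2 * c₂ * k) * Δt ^ 2 := by
    intro k
    induction k with
    | zero => intro _; simp [h0p]
    | succ j ih =>
      intro hj
      have h := norm_sub_le_of_steps (hpf j hj) (hpg j hj)
      rw [← smul_sub, norm_smul, Real.norm_of_nonneg hΔt.le] at h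
      have hi := ih (by omega)
      have hd := mul_le_mul_of_nonneg_left (hD j (by omega)) hΔt.le
      push_cast
      linarith
  intro k
  induction k with
  | zero => intro _; simp [h0q]
  | succ j ih =>
    intro hj
    have hf := hqf j hj
    have hg := hqg j hj
    rw [sub_sub _ ((Δt / m) • _)] at hf hg
    have h := norm_sub_le_of_steps hf hg
    have hv : ‖((Δt / m) • pf j + (Δt ^ 2 / (2 * m)) • pdotf j)
          - ((Δt / m) • pg j + (Δt ^ 2 / (2 * m)) • pdotg j)‖
        ≤ (Δt / m) * ‖pf j - pg j‖ + (Δt ^ 2 / (2 * m)) * ‖pdotf j - pdotg j‖ := by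
      rw [add_sub_add_comm, ← smul_sub, ← smul_sub]
      refine (norm_add_le _ _).trans_eq ?_
      rw [norm_smul, norm_smul, Real.norm_of_nonneg (by positivity : 0 ≤ Δt / m),
        Real.norm_of_nonneg (by positivity : 0 ≤ Δt ^ 2 / (2 * m))]
    have hi := ih (by omega)
    have hp := mul_le_mul_of_nonneg_left (hP j (by omega)) (by positivity : 0 ≤ Δt / m)
    have hd := mul_le_mul_of_nonneg_left (hD j (by omega))
      (by positivity : 0 ≤ Δt ^ 2 / (2 * m))
    -- The slack: the increment of the claimed bound minus the increment of the recursion.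
    have hs : 0 ≤ (2 * c₁ * j + c₁ / 3 + c₁ / 2 + c₂) / m * Δt ^ 3 := by positivity
    have key : ((c₁ / (3 * m)) * ((j : ℝ) + 1) ^ 3 + ((c₁ + 2 * c₂) / (2 * m)) * ((j : ℝ) + 1) ^ 2
          + 2 * c₃ * ((j : ℝ) + 1)) * Δt ^ 3
        = ((c₁ / (3 * m)) * (j : ℝ) ^ 3 + ((c₁ + 2 * c₂) / (2 * m)) * (j : ℝ) ^ 2
          + 2 * c₃ * j) * Δt ^ 3
        + Δt / m * ((c₁ * j * (j - 1) + 2 * c₂ * j) * Δt ^ 2)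
        + Δt ^ 2 / (2 * m) * (2 * c₁ * j * Δt) + 2 * (c₃ * Δt ^ 3)
        + (2 * c₁ * j + c₁ / 3 + c₁ / 2 + c₂) / m * Δt ^ 3 := by
      field_simp
      ring
    push_cast
    rw [key]
    linarith
end

section
/- Let E be a real normed vector space, Δt > 0, m > 0, S > 0, c₁, c₂, c₃ ≥ 0, T ∈ ℕ with T·Δt ≤ S. Let q^f, p^f, ṗ^f, q^g, p^g, ṗ^g : ℕ → E satisfy, for all j < T: ‖q(j+1) − q(j) − (Δt/m) • p(j) − (Δt²/(2m)) • ṗ(j)‖ ≤ c₃·Δt³, ‖p(j+1) − p(j) − Δt • ṗ(j)‖ ≤ c₂·Δt², and ‖ṗ(j+1) − ṗ(j)‖ ≤ c₁·Δt for both the forward triple (q^f, p^f, ṗ^f) and the ground-truth triple (q^g, p^g, ṗ^g), with equal initial values q^f(0) = q^g(0), p^f(0) = p^g(0), ṗ^f(0) = ṗ^g(0). Then the reconstruction loss satisfies ∑_{j=0}^{T} (‖q^f(j) − q^g(j)‖² + ‖p^f(j) − p^g(j)‖²) ≤ ((c₁ + 2c₂)²·S² + (c₁/(3m) + (c₁ +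 2c₂)/(2m) + 2c₃)²·S⁴) · T³·Δt². In particular, for a fixed total time horizon the reconstruction loss is O(T³·Δt²). -/
/-!
The differences `r`, `p`, `q` of the two trajectories (in `ṗ`, `p`, `q`) start at zero and satisfy
the one-step relations with doubled error constants. Summing the steps gives in turn
`‖r j‖ ≤ 2c₁·j·Δt`, then `‖p j‖ ≤ (2c₂·j + c₁·j(j-1))·Δt²`, then
`‖q j‖ ≤ (c₁·j³/(3m) + c₂·j²/m + 2c₃·j)·Δt³`.
For a natural number `j ≤ T` these are at most `A·T²·Δt²` and `B·T³·Δt³`, where `A` and `B` are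
the constants in the theorem; with `T·Δt ≤ S` every term of the loss is at most
`(A²S² + B²S⁴)·T²·Δt²`. The term `j = 0` vanishes, so only `T` terms contribute.
-/

/-- Reconstruction loss bound (first half of Theorem 1): under forward Taylor-expansion
hypotheses with equal initial values and total time horizon `T·Δt ≤ S`, the reconstruction
loss `∑_{j=0}^{T} (‖q^f(j) − q^g(j)‖² + ‖p^f(j) − p^g(j)‖²)` is at most
`((c₁+2c₂)²·S² + (c₁/(3m) + (c₁+2c₂)/(2m) + 2c₃)²·S⁴)·T³·Δt²`, i.e. `O(T³Δt²)`. -/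
theorem reconstruction_loss_bound {E : Type*} [NormedAddCommGroup E] [NormedSpace ℝ E]
    (Δt : ℝ) (hΔt : 0 < Δt) (m : ℝ) (hm : 0 < m) (S : ℝ) (hS : 0 < S)
    (c₁ c₂ c₃ : ℝ) (hc₁ : 0 ≤ c₁) (hc₂ : 0 ≤ c₂) (hc₃ : 0 ≤ c₃) (T : ℕ)
    (hTS : (T : ℝ) * Δt ≤ S)
    (qf pf pdotf qg pg pdotg : ℕ → E)
    (hqf : ∀ j < T,
      ‖qf (j + 1) - qf j - (Δt / m) • pf j - (Δt ^ 2 / (2 * m)) • pdotf j‖ ≤ c₃ * Δt ^ 3)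
    (hqg : ∀ j < T,
      ‖qg (j + 1) - qg j - (Δt / m) • pg j - (Δt ^ 2 / (2 * m)) • pdotg j‖ ≤ c₃ * Δt ^ 3)
    (hpf : ∀ j < T, ‖pf (j + 1) - pf j - Δt • pdotf j‖ ≤ c₂ * Δt ^ 2)
    (hpg : ∀ j < T, ‖pg (j + 1) - pg j - Δt • pdotg j‖ ≤ c₂ * Δt ^ 2)
    (hpdotf : ∀ j < T, ‖pdotf (j + 1) - pdotf j‖ ≤ c₁ * Δt)
    (hpdotg : ∀ j < T, ‖pdotg (j + 1) - pdotg j‖ ≤ c₁ * Δt)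
    (h0q : qf 0 = qg 0) (h0p : pf 0 = pg 0) (h0pdot : pdotf 0 = pdotg 0) :
    ∑ j ∈ Finset.range (T + 1), (‖qf j - qg j‖ ^ 2 + ‖pf j - pg j‖ ^ 2) ≤
      ((c₁ + 2 * c₂) ^ 2 * S ^ 2
        + (c₁ / (3 * m) + (c₁ + 2 * c₂) / (2 * m) + 2 * c₃) ^ 2 * S ^ 4)
      * (T : ℝ) ^ 3 * Δt ^ 2 := by
  -- Two approximate steps, by `u` and by `v`, with the same error bound `ε`.
  have step : ∀ (a b a' b' u v : E) (ε : ℝ), ‖a' - a - u‖ ≤ ε → ‖b' - b - v‖ ≤ ε →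
      ‖a' - b'‖ ≤ ‖a - b‖ + ‖u - v‖ + 2 * ε := by
    intro a b a' b' u v ε ha hb
    have e : a' - b' = (a - b) + (u - v) + ((a' - a - u) - (b' - b - v)) := by abel
    rw [e]
    have h1 := norm_add₃_le (a := a - b) (b := u - v) (c := (a' - a - u) - (b' - b - v))
    have h2 := norm_sub_le (a' - a - u) (b' - b - v)
    linarith
  have hr : ∀ j ≤ T, ‖pdotf j - pdotg j‖ ≤ 2 * c₁ * j * Δt := by
    intro j
    induction j with
    | zero => intro _; simp [h0pdot]
    | succ k ih =>
      intro hk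
      have h := step (pdotf k) (pdotg k) (pdotf (k + 1)) (pdotg (k + 1)) 0 0 (c₁ * Δt)
        (by simpa using hpdotf k hk) (by simpa using hpdotg k hk)
      have := ih (by omega)
      simp only [sub_zero, norm_zero] at h
      push_cast
      linarith
  have hp : ∀ j ≤ T, ‖pf j - pg j‖ ≤ (2 * c₂ * j + c₁ * (j * (j - 1))) * Δt ^ 2 := by
    intro j
    induction j with
    | zero => intro _; simp [h0p]
    | succ k ih =>
      intro hk
      have h := step _ _ _ _ _ _ _ (hpf k hk) (hpg k hk)
      have h1 := ih (by omega)
      rw [← smul_sub, norm_smul, Real.norm_of_nonneg hΔt.le] at h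
      have h2 := mul_le_mul_of_nonneg_left (hr k (by omega)) hΔt.le
      push_cast
      linarith
  have hq : ∀ j ≤ T, ‖qf j - qg j‖ ≤
      (c₁ / (3 * m) * (j : ℝ) ^ 3 + c₂ / m * (j : ℝ) ^ 2 + 2 * c₃ * j) * Δt ^ 3 := by
    intro j
    induction j with
    | zero => intro _; simp [h0q]
    | succ k ih =>
      intro hk
      have h := step (qf k) (qg k) (qf (k + 1)) (qg (k + 1))
        ((Δt / m) • pf k + (Δt ^ 2 / (2 * m)) • pdotf k)
        ((Δt / m) • pg k + (Δt ^ 2 / (2 * m)) • pdotg k) (c₃ * Δt ^ 3)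
        (by simpa only [sub_sub, add_assoc] using hqf k hk) (by simpa only [sub_sub, add_assoc] using hqg k hk)
      have h1 := ih (by omega)
      have hu := norm_add_le ((Δt / m) • (pf k - pg k)) ((Δt ^ 2 / (2 * m)) • (pdotf k - pdotg k))
      have a0 : 0 ≤ Δt / m := by positivity
      have b0 : 0 ≤ Δt ^ 2 / (2 * m) := by positivity
      rw [norm_smul, norm_smul, Real.norm_of_nonneg a0, Real.norm_of_nonneg b0, smul_sub, smul_sub,
        sub_add_sub_comm] at hu
      have h2 := mul_le_mul_of_nonneg_left (hp k (by omega)) a0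
      have h3 := mul_le_mul_of_nonneg_left (hr k (by omega)) b0
      have hk0 : (0 : ℝ) ≤ k := k.cast_nonneg
      -- The slack left by bounding `∑ i²` by `j³/3` and `∑ 2i` by `j²`.
      have h4 : 0 ≤ (c₁ / (3 * m) * (3 * k + 1) + c₂ / m) * Δt ^ 3 := by positivity
      have h5 : (c₁ / (3 * m) * ((k : ℝ) + 1) ^ 3 + c₂ / m * ((k : ℝ) + 1) ^ 2
            + 2 * c₃ * (k + 1)) * Δt ^ 3
          = (c₁ / (3 * m) * (k : ℝ) ^ 3 + c₂ / m * (k : ℝ) ^ 2 + 2 * c₃ * k) * Δt ^ 3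
            + Δt / m * ((2 * c₂ * k + c₁ * (k * (k - 1))) * Δt ^ 2)
            + Δt ^ 2 / (2 * m) * (2 * c₁ * k * Δt) + 2 * (c₃ * Δt ^ 3)
            + (c₁ / (3 * m) * (3 * k + 1) + c₂ / m) * Δt ^ 3 := by
        field_simp
        ring
      push_cast
      rw [h5]
      linarith
  set A := c₁ + 2 * c₂ with hA
  set B := c₁ / (3 * m) + A / (2 * m) + 2 * c₃ with hB
  have hA0 : 0 ≤ A := by positivity
  have hB0 : 0 ≤ B := by positivity
  have hT0 : (0 : ℝ) ≤ T := T.cast_nonneg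
  have term : ∀ j ∈ Finset.range T, ‖qf (j + 1) - qg (j + 1)‖ ^ 2 + ‖pf (j + 1) - pg (j + 1)‖ ^ 2 ≤
      (A ^ 2 * S ^ 2 + B ^ 2 * S ^ 4) * (T : ℝ) ^ 2 * Δt ^ 2 := by
    intro j hj
    have hjT : j + 1 ≤ T := Finset.mem_range.mp hj
    have hP := hp (j + 1) hjT
    have hQ := hq (j + 1) hjT
    have hx1 : (1 : ℝ) ≤ ((j + 1 : ℕ) : ℝ) := by exact_mod_cast Nat.succ_le_succ j.zero_le
    have hxT : ((j + 1 : ℕ) : ℝ) ≤ T := by exact_mod_cast hjT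
    generalize ((j + 1 : ℕ) : ℝ) = x at hP hQ hx1 hxT
    have hT1 : (1 : ℝ) ≤ T := hx1.trans hxT
    have x2 : x ^ 2 ≤ (T : ℝ) ^ 2 := by gcongr
    have x3 : x ^ 3 ≤ (T : ℝ) ^ 3 := by gcongr
    have t12 : (T : ℝ) ≤ (T : ℝ) ^ 2 := by nlinarith
    have t23 : (T : ℝ) ^ 2 ≤ (T : ℝ) ^ 3 := by nlinarith [sq_nonneg (T : ℝ)]
    have hP' : ‖pf (j + 1) - pg (j + 1)‖ ≤ A * S * (T * Δt) := by
      calc _ ≤ _ := hP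
        _ ≤ (2 * c₂ * (T : ℝ) ^ 2 + c₁ * (T : ℝ) ^ 2) * Δt ^ 2 := by
          gcongr
          · linarith
          · nlinarith
        _ = A * (T * Δt) * (T * Δt) := by rw [hA]; ring
        _ ≤ _ := by gcongr
    have hQ' : ‖qf (j + 1) - qg (j + 1)‖ ≤ B * S ^ 2 * (T * Δt) := by
      calc _ ≤ _ := hQ
        _ ≤ (c₁ / (3 * m) * (T : ℝ) ^ 3 + c₂ / m * (T : ℝ) ^ 3 + 2 * c₃ * (T : ℝ) ^ 3)
              * Δt ^ 3 := by
          gcongr <;> linarith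
        _ ≤ (c₁ / (3 * m) * (T : ℝ) ^ 3 + c₂ / m * (T : ℝ) ^ 3 + 2 * c₃ * (T : ℝ) ^ 3)
              * Δt ^ 3 + c₁ / (2 * m) * (T : ℝ) ^ 3 * Δt ^ 3 :=
          le_add_of_nonneg_right (by positivity)
        _ = B * (T * Δt) ^ 2 * (T * Δt) := by
          rw [hB, hA]
          field_simp
          ring
        _ ≤ _ := by gcongr
    calc _ ≤ (B * S ^ 2 * (T * Δt)) ^ 2 + (A * S * (T * Δt)) ^ 2 := by gcongr
      _ = _ := by ring
  rw [Finset.sum_range_succ']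
  have := Finset.sum_le_sum term
  rw [Finset.sum_const, Finset.card_range, nsmul_eq_mul] at this
  simp only [h0q, h0p, sub_self, norm_zero]
  linarith
end

section
/- Let E be a real normed vector space, Δt > 0, c₁, c₂ ≥ 0, T ∈ ℕ. Let p^f, ṗ^f, p^r, ṗ^r : ℕ → E be sequences such that for all j < T: ‖p^f(j) − p^f(j+1) + Δt • ṗ^f(j+1)‖ ≤ c₂·Δt², ‖p^r(j) − p^r(j+1) − Δt • ṗ^r(j+1)‖ ≤ c₂·Δt², ‖ṗ^f(j) − ṗ^f(j+1)‖ ≤ c₁·Δt, ‖ṗ^r(j) − ṗ^r(j+1)‖ ≤ c₁·Δt, and such that p^r(T) = −p^f(T) and ṗ^r(T) = ṗ^f(T). Then for all k ≤ T, ‖p^r(k) + p^f(k)‖ ≤ max(c₁, 2·c₂)·(T − k)²·Δt². -/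
/-!
Put `s k = pr k + pf k` and `d k = pdotr k - pdotf k`. Both vanish at `k = T`. Adding the two
Taylor expansions makes the first-order terms combine into `s j = s (j + 1) + Δt • d (j + 1) + e`
with `‖e‖ ≤ 2 * c₂ * Δt ^ 2`, while `‖d k‖` grows by at most `2 * c₁ * Δt` per step backward from
`T`. With `M = max c₁ (2 * c₂)` and `m` steps remaining to `T`, one further step therefore adds at
most `(2 * c₁ * m + 2 * c₂) * Δt ^ 2 ≤ M * (2 * m + 1) * Δt ^ 2` to `‖s‖`, and
`m ^ 2 + (2 * m + 1) = (m + 1) ^ 2`.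
-/


/-- Momentum error bound between the reverse and forward trajectories: under backward
first-order Taylor expansions with remainders at most `c₂·Δt²`, momentum-derivative
increments at most `c₁·Δt`, and time-reversed final conditions `p^r(T) = −p^f(T)`,
`ṗ^r(T) = ṗ^f(T)`, we have `‖p^r(k) + p^f(k)‖ ≤ max(c₁, 2c₂)·(T − k)²·Δt²` for all `k ≤ T`. -/
theorem reverse_momentum_error_bound {E : Type*} [NormedAddCommGroup E] [NormedSpace ℝ E]
    (Δt : ℝ) (hΔt : 0 < Δt) (c₁ c₂ : ℝ) (hc₁ : 0 ≤ c₁) (hc₂ : 0 ≤ c₂) (T : ℕ)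
    (pf pdotf pr pdotr : ℕ → E)
    (hpf : ∀ j < T, ‖pf j - pf (j + 1) + Δt • pdotf (j + 1)‖ ≤ c₂ * Δt ^ 2)
    (hpr : ∀ j < T, ‖pr j - pr (j + 1) - Δt • pdotr (j + 1)‖ ≤ c₂ * Δt ^ 2)
    (hpdotf : ∀ j < T, ‖pdotf j - pdotf (j + 1)‖ ≤ c₁ * Δt)
    (hpdotr : ∀ j < T, ‖pdotr j - pdotr (j + 1)‖ ≤ c₁ * Δt)
    (hTp : pr T = -pf T) (hTpdot : pdotr T = pdotf T) :
    ∀ k ≤ T, ‖pr k + pf k‖ ≤ max c₁ (2 * c₂) * ((T : ℝ) - k) ^ 2 * Δt ^ 2 := by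
  -- Backward induction on time, parametrized by the number `m` of steps remaining to `T`.
  have key : ∀ m k : ℕ, k + m = T → ‖pdotr k - pdotf k‖ ≤ 2 * c₁ * m * Δt ∧
      ‖pr k + pf k‖ ≤ max c₁ (2 * c₂) * (m : ℝ) ^ 2 * Δt ^ 2 := by
    intro m
    induction m with
    | zero =>
      intro k hk
      obtain rfl : k = T := by omega
      simp [hTp, hTpdot]
    | succ m ih =>
      intro k hk
      obtain ⟨hd, hs⟩ := ih (k + 1) (by omega)
      have hkT : k < T := by omega
      have hd_eq : pdotr k - pdotf k = (pdotr (k + 1) - pdotf (k + 1))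
          + (pdotr k - pdotr (k + 1)) - (pdotf k - pdotf (k + 1)) := by abel
      have hs_eq : pr k + pf k = (pr (k + 1) + pf (k + 1))
          + Δt • (pdotr (k + 1) - pdotf (k + 1))
          + (pr k - pr (k + 1) - Δt • pdotr (k + 1))
          + (pf k - pf (k + 1) + Δt • pdotf (k + 1)) := by
        rw [smul_sub]; abel
      push_cast
      constructor
      · have h1 := hpdotf k hkT
        have h2 := hpdotr k hkT
        rw [hd_eq]
        refine (norm_sub_le_of_le (norm_add_le_of_le hd h2) h1).trans (le_of_eq ?_)
        ring
      · have hsmul : ‖Δt • (pdotr (k + 1) - pdotf (k + 1))‖ ≤ Δt * (2 * c₁ * m * Δt) := by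
          rw [norm_smul, Real.norm_of_nonneg hΔt.le]
          gcongr
        have hsum : ‖pr k + pf k‖ ≤ max c₁ (2 * c₂) * (m : ℝ) ^ 2 * Δt ^ 2
            + Δt * (2 * c₁ * m * Δt) + c₂ * Δt ^ 2 + c₂ * Δt ^ 2 := by
          rw [hs_eq]
          exact norm_add_le_of_le
            (norm_add_le_of_le (norm_add_le_of_le hs hsmul) (hpr k hkT)) (hpf k hkT)
        have hstep : (2 * m * c₁ + 2 * c₂) * Δt ^ 2
            ≤ (2 * m * max c₁ (2 * c₂) + max c₁ (2 * c₂)) * Δt ^ 2 := by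
          gcongr
          · exact le_max_left _ _
          · exact le_max_right _ _
        linarith
  intro k hk
  have h := (key (T - k) k (by omega)).2
  rwa [Nat.cast_sub hk] at h
end

section
/- Let E be a real normed vector space, Δt > 0, m > 0, c₁, c₂, c₃ ≥ 0, T ∈ ℕ. Let q^f, p^f, ṗ^f, q^r, p^r, ṗ^r : ℕ → E be sequences such that for all j < T: ‖q^f(j) − q^f(j+1) + (Δt/m) • p^f(j+1) − (Δt²/(2m)) • ṗ^f(j+1)‖ ≤ c₃·Δt³, ‖q^r(j) − q^r(j+1) − (Δt/m) • p^r(j+1) − (Δt²/(2m)) • ṗ^r(j+1)‖ ≤ c₃·Δt³, ‖p^f(j) − p^f(j+1) + Δt • ṗ^f(j+1)‖ ≤ c₂·Δt², ‖p^r(j) − p^r(j+1) − Δt • ṗ^r(j+1)‖ ≤ c₂·Δt², ‖ṗ^f(j) − ṗ^f(j+1)‖ ≤ c₁·Δt, ‖ṗ^r(j) − ṗ^r(j+1)‖ ≤ c₁·Δt, and such that q^r(T) = q^f(T), p^r(T) = −p^f(T), ṗ^r(T) = ṗ^f(T). Then for all k ≤ T, ‖q^r(k) − q^f(k)‖ ≤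 max( max(c₁, 2·c₂)/(3m), 2·c₃ ) · (T − k)³·Δt³. -/
/-!
Compare the two trajectories backward from time `T`, where they agree up to time reversal.
Write `A = max c₁ (2 c₂)` and `M = max (A / (3 m)) (2 c₃)`. After `n` backward steps,

* the momentum derivatives differ by at most `2 A n Δt`;
* the momenta, compared after the sign flip, differ by at most `A n² Δt²`, since
  `n² + 2 n + 1 = (n + 1)²`;
* the positions differ by at most `M n³ Δt³`: one step adds at most
  `((A / m) (n² + n) + 2 c₃) Δt³ ≤ M (3 n² + 3 n + 1) Δt³ = M ((n + 1)³ - n³) Δt³`.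

The coupling of the three bounds makes this one simultaneous induction on `n`
(`reverse_error_bounds`).
-/

/-- The three coupled error bounds after `n` backward steps, for any constants `A` and `M`
large enough to absorb the one-step errors. -/
lemma reverse_error_bounds {E : Type*} [NormedAddCommGroup E] [NormedSpace ℝ E]
    {Δt m c₁ c₂ c₃ A M : ℝ} (hΔt : 0 < Δt) (hm : 0 < m)
    (hA₁ : c₁ ≤ A) (hA₂ : 2 * c₂ ≤ A) (hM₁ : A / (3 * m) ≤ M) (hM₂ : 2 * c₃ ≤ M) {T : ℕ}
    {qf pf pdotf qr pr pdotr : ℕ → E}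
    (hqf : ∀ j < T,
      ‖qf j - qf (j + 1) + (Δt / m) • pf (j + 1) - (Δt ^ 2 / (2 * m)) • pdotf (j + 1)‖
        ≤ c₃ * Δt ^ 3)
    (hqr : ∀ j < T,
      ‖qr j - qr (j + 1) - (Δt / m) • pr (j + 1) - (Δt ^ 2 / (2 * m)) • pdotr (j + 1)‖
        ≤ c₃ * Δt ^ 3)
    (hpf : ∀ j < T, ‖pf j - pf (j + 1) + Δt • pdotf (j + 1)‖ ≤ c₂ * Δt ^ 2)
    (hpr : ∀ j < T, ‖pr j - pr (j + 1) - Δt • pdotr (j + 1)‖ ≤ c₂ * Δt ^ 2)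
    (hpdotf : ∀ j < T, ‖pdotf j - pdotf (j + 1)‖ ≤ c₁ * Δt)
    (hpdotr : ∀ j < T, ‖pdotr j - pdotr (j + 1)‖ ≤ c₁ * Δt)
    (hTq : qr T = qf T) (hTp : pr T = -pf T) (hTpdot : pdotr T = pdotf T) (n : ℕ) :
    ∀ k, k + n = T →
      ‖pdotr k - pdotf k‖ ≤ 2 * A * n * Δt ∧
      ‖pr k + pf k‖ ≤ A * (n : ℝ) ^ 2 * Δt ^ 2 ∧
      ‖qr k - qf k‖ ≤ M * (n : ℝ) ^ 3 * Δt ^ 3 := by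
  induction n with
  | zero =>
    intro k hk
    obtain rfl : k = T := by omega
    simp [hTq, hTp, hTpdot]
  | succ n ih =>
    intro k hk
    have hkT : k < T := by omega
    obtain ⟨ihd, ihp, ihq⟩ := ih (k + 1) (by omega)
    push_cast
    refine ⟨?_, ?_, ?_⟩
    · have hdecomp : pdotr k - pdotf k = (pdotr k - pdotr (k + 1)) - (pdotf k - pdotf (k + 1))
          + (pdotr (k + 1) - pdotf (k + 1)) := by abel
      have hstep : c₁ * Δt ≤ A * Δt := by gcongr
      rw [hdecomp]
      refine (norm_add_le_of_le
        (norm_sub_le_of_le (hpdotr k hkT) (hpdotf k hkT)) ihd).trans ?_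
      linarith
    · have hdecomp : pr k + pf k = (pr k - pr (k + 1) - Δt • pdotr (k + 1))
          + (pf k - pf (k + 1) + Δt • pdotf (k + 1))
          + (pr (k + 1) + pf (k + 1)) + Δt • (pdotr (k + 1) - pdotf (k + 1)) := by
        module
      have hd : ‖Δt • (pdotr (k + 1) - pdotf (k + 1))‖ ≤ Δt * (2 * A * n * Δt) := by
        rw [norm_smul, Real.norm_of_nonneg hΔt.le]
        gcongr
      have hstep : 2 * c₂ * Δt ^ 2 ≤ A * Δt ^ 2 := by gcongr
      rw [hdecomp]
      refine (norm_add_le_of_le (norm_add_le_of_le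
        (norm_add_le_of_le (hpr k hkT) (hpf k hkT)) ihp) hd).trans ?_
      linarith
    · have hdecomp : qr k - qf k =
          (qr k - qr (k + 1) - (Δt / m) • pr (k + 1) - (Δt ^ 2 / (2 * m)) • pdotr (k + 1))
          - (qf k - qf (k + 1) + (Δt / m) • pf (k + 1) - (Δt ^ 2 / (2 * m)) • pdotf (k + 1))
          + (qr (k + 1) - qf (k + 1)) + (Δt / m) • (pr (k + 1) + pf (k + 1))
          + (Δt ^ 2 / (2 * m)) • (pdotr (k + 1) - pdotf (k + 1)) := by
        module
      have hp : ‖(Δt / m) • (pr (k + 1) + pf (k + 1))‖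
          ≤ Δt / m * (A * (n : ℝ) ^ 2 * Δt ^ 2) := by
        rw [norm_smul, Real.norm_of_nonneg (by positivity)]
        gcongr
      have hd : ‖(Δt ^ 2 / (2 * m)) • (pdotr (k + 1) - pdotf (k + 1))‖
          ≤ Δt ^ 2 / (2 * m) * (2 * A * n * Δt) := by
        rw [norm_smul, Real.norm_of_nonneg (by positivity)]
        gcongr
      have hcoef : Δt / m * (A * (n : ℝ) ^ 2 * Δt ^ 2) + Δt ^ 2 / (2 * m) * (2 * A * n * Δt)
          = A / (3 * m) * (3 * ((n : ℝ) ^ 2 + n) * Δt ^ 3) := by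
        field_simp
      have hM₁' : A / (3 * m) * (3 * ((n : ℝ) ^ 2 + n) * Δt ^ 3)
          ≤ M * (3 * ((n : ℝ) ^ 2 + n) * Δt ^ 3) := by gcongr
      have hM₂' : 2 * c₃ * Δt ^ 3 ≤ M * Δt ^ 3 := by gcongr
      rw [hdecomp]
      refine (norm_add_le_of_le (norm_add_le_of_le (norm_add_le_of_le
        (norm_sub_le_of_le (hqr k hkT) (hqf k hkT)) ihq) hp) hd).trans ?_
      linarith


/-- Position error bound between the reverse and forward trajectories: under backward
second-order Taylor expansions of the position with remainders at most `c₃·Δt³`,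
backward first-order expansions of the momentum with remainders at most `c₂·Δt²`,
momentum-derivative increments at most `c₁·Δt`, and the time-reversed final conditions
`q^r(T) = q^f(T)`, `p^r(T) = −p^f(T)`, `ṗ^r(T) = ṗ^f(T)`, we have
`‖q^r(k) − q^f(k)‖ ≤ max(max(c₁, 2c₂)/(3m), 2c₃)·(T − k)³·Δt³` for all `k ≤ T`. -/
theorem reverse_position_error_bound {E : Type*} [NormedAddCommGroup E] [NormedSpace ℝ E]
    (Δt : ℝ) (hΔt : 0 < Δt) (m : ℝ) (hm : 0 < m)
    (c₁ c₂ c₃ : ℝ) (hc₁ : 0 ≤ c₁) (hc₂ : 0 ≤ c₂) (hc₃ : 0 ≤ c₃) (T : ℕ)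
    (qf pf pdotf qr pr pdotr : ℕ → E)
    (hqf : ∀ j < T,
      ‖qf j - qf (j + 1) + (Δt / m) • pf (j + 1) - (Δt ^ 2 / (2 * m)) • pdotf (j + 1)‖
        ≤ c₃ * Δt ^ 3)
    (hqr : ∀ j < T,
      ‖qr j - qr (j + 1) - (Δt / m) • pr (j + 1) - (Δt ^ 2 / (2 * m)) • pdotr (j + 1)‖
        ≤ c₃ * Δt ^ 3)
    (hpf : ∀ j < T, ‖pf j - pf (j + 1) + Δt • pdotf (j + 1)‖ ≤ c₂ * Δt ^ 2)
    (hpr : ∀ j < T, ‖pr j - pr (j + 1) - Δt • pdotr (j + 1)‖ ≤ c₂ * Δt ^ 2)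
    (hpdotf : ∀ j < T, ‖pdotf j - pdotf (j + 1)‖ ≤ c₁ * Δt)
    (hpdotr : ∀ j < T, ‖pdotr j - pdotr (j + 1)‖ ≤ c₁ * Δt)
    (hTq : qr T = qf T) (hTp : pr T = -pf T) (hTpdot : pdotr T = pdotf T) :
    ∀ k ≤ T, ‖qr k - qf k‖ ≤
      max (max c₁ (2 * c₂) / (3 * m)) (2 * c₃) * ((T : ℝ) - k) ^ 3 * Δt ^ 3 := by
  intro k hk
  have h := (reverse_error_bounds hΔt hm (le_max_left c₁ (2 * c₂)) (le_max_right _ _)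
    (le_max_left _ (2 * c₃)) (le_max_right _ _) hqf hqr hpf hpr hpdotf hpdotr
    hTq hTp hTpdot (T - k) k (by omega)).2.2
  rwa [Nat.cast_sub hk] at h
end

section
/- Let E be a real normed vector space, Δt > 0, m > 0, S > 0, c₁, c₂, c₃ ≥ 0, T ∈ ℕ with T·Δt ≤ S. Let q^f, p^f, ṗ^f, q^r, p^r, ṗ^r : ℕ → E satisfy, for all j < T: ‖q^f(j) − q^f(j+1) + (Δt/m) • p^f(j+1) − (Δt²/(2m)) • ṗ^f(j+1)‖ ≤ c₃·Δt³, ‖q^r(j) − q^r(j+1) − (Δt/m) • p^r(j+1) − (Δt²/(2m)) • ṗ^r(j+1)‖ ≤ c₃·Δt³, ‖p^f(j) − p^f(j+1) + Δt • ṗ^f(j+1)‖ ≤ c₂·Δt², ‖p^r(j) − p^r(j+1) − Δt • ṗ^r(j+1)‖ ≤ c₂·Δt², ‖ṗ^f(j) − ṗ^f(j+1)‖ ≤ c₁·Δt, ‖ṗ^r(j) − ṗ^r(j+1)‖ ≤ c₁·Δt, with q^r(T) = q^f(T), p^r(T) = −p^f(T), ṗ^r(T) = ṗ^f(T). Then the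 time-reversal loss satisfies ∑_{j=0}^{T} (‖p^r(j) + p^f(j)‖² + ‖q^r(j) − q^f(j)‖²) ≤ ( max(c₁, 2·c₂)² + max( max(c₁, 2·c₂)/(3m), 2·c₃ )²·S² ) · T⁵·Δt⁴. In particular, for a fixed total time horizon the time-reversal loss is O(T⁵·Δt⁴). -/
/-!
Write `k = T - j` for the number of reverse steps taken and consider the defects
`D = pdotr - pdotf`, `P = pr + pf`, `Q = qr - qf`, which all vanish at `T`. Adding or subtracting
the forward and reverse Taylor relations gives, for one backward step,
`‖D‖` grows by at most `2 c₁ Δt`, `‖P‖` by at most `Δt ‖D‖ + 2 c₂ Δt²`, and `‖Q‖` by at most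
`(Δt / m) ‖P‖ + (Δt² / (2 m)) ‖D‖ + 2 c₃ Δt³`. Summing these recursions exactly
(`pdot_defect_bound`, `momentum_defect_bound`, `position_defect_bound`) gives bounds of order
`k Δt`, `k² Δt²`, `k³ Δt³`. The `T` nonzero terms of the loss are then each at most
`M² T⁴ Δt⁴ + N² T⁶ Δt⁶`, with `M = max c₁ (2 c₂)` and `N = max (M / (3 m)) (2 c₃)`, and
`(T Δt)² ≤ S²` absorbs the excess powers.
-/

theorem pdot_defect_bound {E : Type*} [NormedAddCommGroup E] {Δt c₁ : ℝ} {T : ℕ} {a b : ℕ → E}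
    (ha : ∀ j < T, ‖a j - a (j + 1)‖ ≤ c₁ * Δt) (hb : ∀ j < T, ‖b j - b (j + 1)‖ ≤ c₁ * Δt)
    (hT : b T = a T) (k : ℕ) : ∀ j, j + k = T → ‖b j - a j‖ ≤ 2 * c₁ * Δt * k := by
  induction k with
  | zero => rintro j rfl; simp_all
  | succ k ih =>
    intro j hj
    have h := ih (j + 1) (by omega)
    have e : b j - a j =
        (b (j + 1) - a (j + 1)) + ((b j - b (j + 1)) - (a j - a (j + 1))) := by abel
    rw [e]
    have h1 := norm_add_le (b (j + 1) - a (j + 1)) ((b j - b (j + 1)) - (a j - a (j + 1)))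
    have h2 := norm_sub_le (b j - b (j + 1)) (a j - a (j + 1))
    have h3 := ha j (by omega)
    have h4 := hb j (by omega)
    push_cast
    linarith

theorem momentum_defect_bound {E : Type*} [NormedAddCommGroup E] [NormedSpace ℝ E]
    {Δt c₁ c₂ : ℝ} (hΔt : 0 < Δt) {T : ℕ} {pf pr a b : ℕ → E}
    (hpf : ∀ j < T, ‖pf j - pf (j + 1) + Δt • a (j + 1)‖ ≤ c₂ * Δt ^ 2)
    (hpr : ∀ j < T, ‖pr j - pr (j + 1) - Δt • b (j + 1)‖ ≤ c₂ * Δt ^ 2)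
    (hD : ∀ k j : ℕ, j + k = T → ‖b j - a j‖ ≤ 2 * c₁ * Δt * k)
    (hT : pr T = -pf T) (k : ℕ) :
    ∀ j, j + k = T → ‖pr j + pf j‖ ≤ Δt ^ 2 * (c₁ * (k * (k - 1)) + 2 * c₂ * k) := by
  induction k with
  | zero => rintro j rfl; simp_all
  | succ k ih =>
    intro j hj
    have h := ih (j + 1) (by omega)
    have e : pr j + pf j = ((pr (j + 1) + pf (j + 1)) + Δt • (b (j + 1) - a (j + 1))) +
        ((pr j - pr (j + 1) - Δt • b (j + 1)) + (pf j - pf (j + 1) + Δt • a (j + 1))) := by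
      module
    have h1 : ‖pr j + pf j‖ ≤ (‖pr (j + 1) + pf (j + 1)‖ + ‖Δt • (b (j + 1) - a (j + 1))‖) +
        (‖pr j - pr (j + 1) - Δt • b (j + 1)‖ + ‖pf j - pf (j + 1) + Δt • a (j + 1)‖) := by
      rw [e]
      exact (norm_add_le _ _).trans (add_le_add (norm_add_le _ _) (norm_add_le _ _))
    rw [norm_smul, Real.norm_of_nonneg hΔt.le] at h1
    have h2 := mul_le_mul_of_nonneg_left (hD k (j + 1) (by omega)) hΔt.le
    have h3 := hpf j (by omega)
    have h4 := hpr j (by omega)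
    push_cast
    linarith

/-- The cubic coefficient comes from `∑ i < k, (i² + i) = (k³ - k) / 3`. -/
theorem position_defect_bound {E : Type*} [NormedAddCommGroup E] [NormedSpace ℝ E]
    {Δt m c₁ c₂ c₃ M : ℝ} (hΔt : 0 < Δt) (hm : 0 < m) (h₁ : c₁ ≤ M) (h₂ : 2 * c₂ ≤ M)
    {T : ℕ} {qf qr pf pr a b : ℕ → E}
    (hqf : ∀ j < T,
      ‖qf j - qf (j + 1) + (Δt / m) • pf (j + 1) - (Δt ^ 2 / (2 * m)) • a (j + 1)‖
        ≤ c₃ * Δt ^ 3)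
    (hqr : ∀ j < T,
      ‖qr j - qr (j + 1) - (Δt / m) • pr (j + 1) - (Δt ^ 2 / (2 * m)) • b (j + 1)‖
        ≤ c₃ * Δt ^ 3)
    (hD : ∀ k j : ℕ, j + k = T → ‖b j - a j‖ ≤ 2 * c₁ * Δt * k)
    (hP : ∀ k j : ℕ, j + k = T →
      ‖pr j + pf j‖ ≤ Δt ^ 2 * (c₁ * (k * (k - 1)) + 2 * c₂ * k))
    (hT : qr T = qf T) (k : ℕ) :
    ∀ j, j + k = T → ‖qr j - qf j‖ ≤ Δt ^ 3 * (M / (3 * m) * (k ^ 3 - k) + 2 * c₃ * k) := by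
  induction k with
  | zero => rintro j rfl; simp_all
  | succ k ih =>
    intro j hj
    have h := ih (j + 1) (by omega)
    have e : qr j - qf j = ((qr (j + 1) - qf (j + 1)) + ((Δt / m) • (pr (j + 1) + pf (j + 1)) +
          (Δt ^ 2 / (2 * m)) • (b (j + 1) - a (j + 1)))) +
        ((qr j - qr (j + 1) - (Δt / m) • pr (j + 1) - (Δt ^ 2 / (2 * m)) • b (j + 1)) -
          (qf j - qf (j + 1) + (Δt / m) • pf (j + 1) - (Δt ^ 2 / (2 * m)) • a (j + 1))) := by
      module
    have h1 : ‖qr j - qf j‖ ≤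
        (‖qr (j + 1) - qf (j + 1)‖ + (‖(Δt / m) • (pr (j + 1) + pf (j + 1))‖ +
          ‖(Δt ^ 2 / (2 * m)) • (b (j + 1) - a (j + 1))‖)) +
        (‖qr j - qr (j + 1) - (Δt / m) • pr (j + 1) - (Δt ^ 2 / (2 * m)) • b (j + 1)‖ +
          ‖qf j - qf (j + 1) + (Δt / m) • pf (j + 1) - (Δt ^ 2 / (2 * m)) • a (j + 1)‖) := by
      rw [e]
      exact (norm_add_le _ _).trans (add_le_add ((norm_add_le _ _).trans
        (add_le_add le_rfl (norm_add_le _ _))) (norm_sub_le _ _))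
    have hA : 0 ≤ Δt / m := by positivity
    have hB : 0 ≤ Δt ^ 2 / (2 * m) := by positivity
    rw [norm_smul, norm_smul, Real.norm_of_nonneg hA, Real.norm_of_nonneg hB] at h1
    have h2 := mul_le_mul_of_nonneg_left (hP k (j + 1) (by omega)) hA
    have h3 := mul_le_mul_of_nonneg_left (hD k (j + 1) (by omega)) hB
    have h4 := hqf j (by omega)
    have h5 := hqr j (by omega)
    -- The momentum and force defects together contribute `(Δt³ / m) (c₁ k² + 2 c₂ k)`.
    have h6 : Δt / m * (Δt ^ 2 * (c₁ * (k * (k - 1)) + 2 * c₂ * k)) +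
        Δt ^ 2 / (2 * m) * (2 * c₁ * Δt * k) = Δt ^ 3 / m * (c₁ * k ^ 2 + 2 * c₂ * k) := by
      field_simp
      ring
    have h7 : Δt ^ 3 / m * (c₁ * k ^ 2 + 2 * c₂ * k) ≤ Δt ^ 3 / m * (M * k ^ 2 + M * k) := by
      gcongr
    have h8 : Δt ^ 3 * (M / (3 * m) * (((k + 1 : ℕ) : ℝ) ^ 3 - (k + 1 : ℕ)) +
          2 * c₃ * (k + 1 : ℕ)) =
        Δt ^ 3 * (M / (3 * m) * (k ^ 3 - k) + 2 * c₃ * k) +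
          Δt ^ 3 / m * (M * k ^ 2 + M * k) + 2 * (c₃ * Δt ^ 3) := by
      push_cast
      field_simp
      ring
    linarith


/-- Time-reversal loss bound (second half of Theorem 1): under backward Taylor-expansion
hypotheses for the forward and reverse trajectories with time-reversed final conditions
and total time horizon `T·Δt ≤ S`, the time-reversal loss
`∑_{j=0}^{T} (‖p^r(j) + p^f(j)‖² + ‖q^r(j) − q^f(j)‖²)` is at most
`(max(c₁,2c₂)² + max(max(c₁,2c₂)/(3m), 2c₃)²·S²)·T⁵·Δt⁴`, i.e. `O(T⁵Δt⁴)`. -/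
theorem time_reversal_loss_bound {E : Type*} [NormedAddCommGroup E] [NormedSpace ℝ E]
    (Δt : ℝ) (hΔt : 0 < Δt) (m : ℝ) (hm : 0 < m) (S : ℝ) (hS : 0 < S)
    (c₁ c₂ c₃ : ℝ) (hc₁ : 0 ≤ c₁) (hc₂ : 0 ≤ c₂) (hc₃ : 0 ≤ c₃) (T : ℕ)
    (hTS : (T : ℝ) * Δt ≤ S)
    (qf pf pdotf qr pr pdotr : ℕ → E)
    (hqf : ∀ j < T,
      ‖qf j - qf (j + 1) + (Δt / m) • pf (j + 1) - (Δt ^ 2 / (2 * m)) • pdotf (j + 1)‖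
        ≤ c₃ * Δt ^ 3)
    (hqr : ∀ j < T,
      ‖qr j - qr (j + 1) - (Δt / m) • pr (j + 1) - (Δt ^ 2 / (2 * m)) • pdotr (j + 1)‖
        ≤ c₃ * Δt ^ 3)
    (hpf : ∀ j < T, ‖pf j - pf (j + 1) + Δt • pdotf (j + 1)‖ ≤ c₂ * Δt ^ 2)
    (hpr : ∀ j < T, ‖pr j - pr (j + 1) - Δt • pdotr (j + 1)‖ ≤ c₂ * Δt ^ 2)
    (hpdotf : ∀ j < T, ‖pdotf j - pdotf (j + 1)‖ ≤ c₁ * Δt)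
    (hpdotr : ∀ j < T, ‖pdotr j - pdotr (j + 1)‖ ≤ c₁ * Δt)
    (hTq : qr T = qf T) (hTp : pr T = -pf T) (hTpdot : pdotr T = pdotf T) :
    ∑ j ∈ Finset.range (T + 1), (‖pr j + pf j‖ ^ 2 + ‖qr j - qf j‖ ^ 2) ≤
      ((max c₁ (2 * c₂)) ^ 2
        + (max (max c₁ (2 * c₂) / (3 * m)) (2 * c₃)) ^ 2 * S ^ 2)
      * (T : ℝ) ^ 5 * Δt ^ 4 := by
  have hD := pdot_defect_bound hpdotf hpdotr hTpdot
  have hP := momentum_defect_bound hΔt hpf hpr hD hTp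
  have hQ := position_defect_bound hΔt hm (le_max_left c₁ (2 * c₂)) (le_max_right c₁ (2 * c₂))
    hqf hqr hD hP hTq
  have hM₁ := le_max_left c₁ (2 * c₂)
  have hM₂ := le_max_right c₁ (2 * c₂)
  generalize max c₁ (2 * c₂) = M at *
  have hN₁ := le_max_left (M / (3 * m)) (2 * c₃)
  have hN₂ := le_max_right (M / (3 * m)) (2 * c₃)
  generalize max (M / (3 * m)) (2 * c₃) = N at *
  have hM : 0 ≤ M := hc₁.trans hM₁
  have hN : 0 ≤ N := by linarith
  have key : ∀ j ∈ Finset.range T, ‖pr j + pf j‖ ^ 2 + ‖qr j - qf j‖ ^ 2 ≤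
      (M * (Δt ^ 2 * T ^ 2)) ^ 2 + (N * (Δt ^ 3 * T ^ 3)) ^ 2 := by
    intro j hj
    rw [Finset.mem_range] at hj
    obtain ⟨k, hk⟩ : ∃ k, j + k = T := ⟨T - j, by omega⟩
    have hk1 : (1 : ℝ) ≤ k := by exact_mod_cast (by omega : 1 ≤ k)
    have hkT : (k : ℝ) ≤ T := by exact_mod_cast (by omega : k ≤ T)
    have hk0 : (0 : ℝ) ≤ k - 1 := by linarith
    have hk3 : (0 : ℝ) ≤ k ^ 3 - k := by
      have : (k : ℝ) ^ 3 - k = k * (k - 1) * (k + 1) := by ring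
      rw [this]
      positivity
    have p : ‖pr j + pf j‖ ≤ M * (Δt ^ 2 * T ^ 2) := calc
      _ ≤ Δt ^ 2 * (c₁ * (k * (k - 1)) + 2 * c₂ * k) := hP k j hk
      _ ≤ Δt ^ 2 * (M * (k * (k - 1)) + M * k) := by gcongr
      _ = M * (Δt ^ 2 * k ^ 2) := by ring
      _ ≤ M * (Δt ^ 2 * T ^ 2) := by gcongr
    have q : ‖qr j - qf j‖ ≤ N * (Δt ^ 3 * T ^ 3) := calc
      _ ≤ Δt ^ 3 * (M / (3 * m) * (k ^ 3 - k) + 2 * c₃ * k) := hQ k j hk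
      _ ≤ Δt ^ 3 * (N * (k ^ 3 - k) + N * k) := by gcongr
      _ = N * (Δt ^ 3 * k ^ 3) := by ring
      _ ≤ N * (Δt ^ 3 * T ^ 3) := by gcongr
    gcongr
  -- The term `j = T` vanishes, which leaves `T` terms rather than `T + 1`.
  have hlast : ‖pr T + pf T‖ ^ 2 + ‖qr T - qf T‖ ^ 2 = 0 := by simp [hTp, hTq]
  rw [Finset.sum_range_succ, hlast, add_zero]
  have hsum := Finset.sum_le_card_nsmul _ _ _ key
  rw [Finset.card_range, nsmul_eq_mul] at hsum
  calc _ ≤ _ := hsum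
    _ = (M ^ 2 + N ^ 2 * (T * Δt) ^ 2) * (T : ℝ) ^ 5 * Δt ^ 4 := by ring
    _ ≤ (M ^ 2 + N ^ 2 * S ^ 2) * (T : ℝ) ^ 5 * Δt ^ 4 := by gcongr
end

section
/- Let N, d ∈ ℕ, let A : Fin N → Fin N → Prop be a symmetric relation (A i j ↔ A j i), let m > 0 and k ∈ ℝ, and let q, p : ℝ → Fin N → EuclideanSpace ℝ (Fin d) be such that for every t ∈ ℝ and every i, the function t ↦ q t i has derivative (1/m) • p t i at t, and the function t ↦ p t i has derivative −k • ∑_{j with A i j} (q t i − q t j) at t. Then the total energy H(t) = ∑_i ‖p t i‖²/(2m) + (k/4) · ∑_i ∑_{j with A i j} ‖q t i − q t j‖² is constant in t. -/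
/-!
Differentiating the energy gives
`∑ᵢ ⟪pᵢ, ṗᵢ⟫ / m + (k/2) ∑ᵢ ∑_{j ∈ Nᵢ} ⟪qᵢ - qⱼ, q̇ᵢ - q̇ⱼ⟫`. Since adjacency is symmetric and
`qᵢ - qⱼ` is antisymmetric, exchanging `i` and `j` turns the double sum into
`2 ∑ᵢ ∑_{j ∈ Nᵢ} ⟪qᵢ - qⱼ, q̇ᵢ⟫` (`sum_inner_sub_sub`). Substituting the equations of motion, the
two terms cancel, so the energy has zero derivative everywhere and is constant.
-/

/-- Discrete summation by parts over a symmetric relation: the power exerted by all springs,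
counted per ordered pair, is twice the sum of the powers exerted on the individual agents. -/
lemma sum_inner_sub_sub {ι E : Type*} [Fintype ι] [NormedAddCommGroup E] [InnerProductSpace ℝ E]
    (A : ι → ι → Prop) [DecidableRel A] (hA : ∀ i j, A i j ↔ A j i) (x v : ι → E) :
    ∑ i, ∑ j ∈ Finset.univ.filter (fun j => A i j), inner ℝ (x i - x j) (v i - v j)
      = 2 * ∑ i, ∑ j ∈ Finset.univ.filter (fun j => A i j), inner ℝ (x i - x j) (v i) := by
  have swap : ∑ i, ∑ j ∈ Finset.univ.filter (fun j => A i j), inner ℝ (x i - x j) (v j)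
      = -∑ i, ∑ j ∈ Finset.univ.filter (fun j => A i j), inner ℝ (x i - x j) (v i) := by
    simp only [Finset.sum_filter, ← Finset.sum_neg_distrib]
    rw [Finset.sum_comm]
    refine Finset.sum_congr rfl fun i _ => Finset.sum_congr rfl fun j _ => ?_
    simp only [hA j i]
    split_ifs
    · rw [← inner_neg_left, neg_sub]
    · simp
  simp only [inner_sub_right _ (v _) (v _), Finset.sum_sub_distrib, swap]
  ring


/-- Energy conservation for an n-body simple spring system: if positions `q` and
momenta `p` satisfy `dqᵢ/dt = pᵢ/m` and `dpᵢ/dt = −k·∑_{j ∈ Nᵢ} (qᵢ − qⱼ)` for a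
symmetric adjacency relation `A`, then the Hamiltonian
`H(t) = ∑ᵢ ‖pᵢ‖²/(2m) + (k/4)·∑ᵢ ∑_{j ∈ Nᵢ} ‖qᵢ − qⱼ‖²` is constant in time. -/
theorem simple_spring_energy_conservation (N d : ℕ)
    (A : Fin N → Fin N → Prop) [DecidableRel A]
    (hA : ∀ i j, A i j ↔ A j i)
    (m : ℝ) (hm : 0 < m) (k : ℝ)
    (q p : ℝ → Fin N → EuclideanSpace ℝ (Fin d))
    (hq : ∀ t : ℝ, ∀ i, HasDerivAt (fun t => q t i) ((1 / m) • p t i) t)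
    (hp : ∀ t : ℝ, ∀ i, HasDerivAt (fun t => p t i)
      ((-k) • ∑ j ∈ Finset.univ.filter (fun j => A i j), (q t i - q t j)) t) :
    ∀ t₁ t₂ : ℝ,
      ((∑ i, ‖p t₁ i‖ ^ 2 / (2 * m))
        + (k / 4) * ∑ i, ∑ j ∈ Finset.univ.filter (fun j => A i j), ‖q t₁ i - q t₁ j‖ ^ 2)
      =
      ((∑ i, ‖p t₂ i‖ ^ 2 / (2 * m))
        + (k / 4) * ∑ i, ∑ j ∈ Finset.univ.filter (fun j => A i j), ‖q t₂ i - q t₂ j‖ ^ 2) := by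
  have hH : ∀ t : ℝ, HasDerivAt (fun t => (∑ i, ‖p t i‖ ^ 2 / (2 * m))
      + (k / 4) * ∑ i, ∑ j ∈ Finset.univ.filter (fun j => A i j), ‖q t i - q t j‖ ^ 2) 0 t := by
    intro t
    have hkin := HasDerivAt.fun_sum (u := Finset.univ) fun i _ =>
      ((hp t i).norm_sq).div_const (2 * m)
    have hpot := (HasDerivAt.fun_sum (u := Finset.univ) fun i _ =>
      HasDerivAt.fun_sum (u := Finset.univ.filter (fun j => A i j)) fun j _ =>
        ((hq t i).sub (hq t j)).norm_sq).const_mul (k / 4)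
    refine (hkin.add hpot).congr_deriv ?_
    have hsym := sum_inner_sub_sub A hA (q t) (p t)
    have hcomm : ∀ i, inner ℝ (p t i) (∑ j ∈ Finset.univ.filter (fun j => A i j), (q t i - q t j))
        = ∑ j ∈ Finset.univ.filter (fun j => A i j), inner ℝ (q t i - q t j) (p t i) :=
      fun i => by rw [real_inner_comm, sum_inner]
    simp only [Pi.sub_apply, ← smul_sub, real_inner_smul_right, hcomm, ← Finset.mul_sum,
      ← Finset.sum_div, hsym]
    field_simp
    ring
  exact is_const_of_deriv_eq_zero (fun t => (hH t).differentiableAt) fun t => (hH t).deriv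
end

section
/- Let N ∈ ℕ, let A : Fin N → Fin N → Prop be a symmetric relation (A i j ↔ A j i), let m > 0 and k, k₁, ω ∈ ℝ, and let q, p : ℝ → Fin N → ℝ be such that for every t ∈ ℝ and every i, the function t ↦ q t i has derivative p t i / m at t, and the function t ↦ p t i has derivative −k · ∑_{j with A i j} (q t i − q t j) − k₁·cos(ω·t) at t. Define H(t) = ∑_i (p t i)²/(2m) + (k/4) · ∑_i ∑_{j with A i j} (q t i − q t j)² + k₁·cos(ω·t) · ∑_i q t i. Then for every t ∈ ℝ, H has derivative −ω·k₁·sin(ω·t) · ∑_i q t i at t; in particular, the system is not energy-conservative in general. -/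
/-!
Differentiating the Hamiltonian term by term along a trajectory, the kinetic energy contributes
`∑ᵢ (pᵢ/m)·ṗᵢ` and the spring energy contributes `(k/2)·∑ᵢ ∑_{j ∈ Nᵢ} (qᵢ − qⱼ)(pᵢ/m − pⱼ/m)`.
Since the adjacency relation is symmetric, the latter double sum equals
`k·∑ᵢ (pᵢ/m)·∑_{j ∈ Nᵢ} (qᵢ − qⱼ)` (`sum_adj_diff_mul_diff`), which cancels the spring-force part
of the kinetic term. The forcing part of the kinetic term cancels against `k₁·cos(ωt)·∑ᵢ q̇ᵢ`,
so only the explicit time derivative of the forcing potential survives.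
-/

/-- Summation by parts for a graph Laplacian: the symmetric form `∑ᵢ ∑_{j ∈ Nᵢ} (xᵢ − xⱼ)(vᵢ − vⱼ)`
counts each undirected edge twice. -/
lemma sum_adj_diff_mul_diff {N : ℕ} (A : Fin N → Fin N → Prop) [DecidableRel A]
    (hA : ∀ i j, A i j ↔ A j i) (x v : Fin N → ℝ) :
    ∑ i, ∑ j ∈ Finset.univ.filter (fun j => A i j), (x i - x j) * (v i - v j)
      = 2 * ∑ i, v i * ∑ j ∈ Finset.univ.filter (fun j => A i j), (x i - x j) := by
  have hswap : ∑ i, ∑ j ∈ Finset.univ.filter (fun j => A i j), (x i - x j) * v j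
      = -∑ i, ∑ j ∈ Finset.univ.filter (fun j => A i j), (x i - x j) * v i := by
    simp only [Finset.sum_filter]
    rw [Finset.sum_comm, ← Finset.sum_neg_distrib]
    refine Finset.sum_congr rfl fun i _ => ?_
    rw [← Finset.sum_neg_distrib]
    refine Finset.sum_congr rfl fun j _ => ?_
    simp only [hA j i]
    split_ifs <;> ring
  have hmul : ∑ i, v i * ∑ j ∈ Finset.univ.filter (fun j => A i j), (x i - x j)
      = ∑ i, ∑ j ∈ Finset.univ.filter (fun j => A i j), (x i - x j) * v i := by
    refine Finset.sum_congr rfl fun i _ => ?_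
    rw [mul_comm, Finset.sum_mul]
  have hexpand : ∀ i j, (x i - x j) * (v i - v j) = (x i - x j) * v i - (x i - x j) * v j :=
    fun _ _ => mul_sub _ _ _
  rw [hmul]
  simp only [hexpand, Finset.sum_sub_distrib]
  rw [hswap]
  ring


/-- Energy non-conservation of the forced spring system: if `dqᵢ/dt = pᵢ/m` and
`dpᵢ/dt = −k·∑_{j ∈ Nᵢ}(qᵢ − qⱼ) − k₁·cos(ωt)` for a symmetric adjacency relation `A`,
then the Hamiltonian
`H(t) = ∑ᵢ pᵢ²/(2m) + (k/4)·∑ᵢ ∑_{j ∈ Nᵢ} (qᵢ − qⱼ)² + k₁·cos(ωt)·∑ᵢ qᵢ`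
has derivative `−ω·k₁·sin(ωt)·∑ᵢ qᵢ` at every time `t`. -/
theorem forced_spring_energy_derivative (N : ℕ)
    (A : Fin N → Fin N → Prop) [DecidableRel A]
    (hA : ∀ i j, A i j ↔ A j i)
    (m : ℝ) (hm : 0 < m) (k k₁ ω : ℝ)
    (q p : ℝ → Fin N → ℝ)
    (hq : ∀ t : ℝ, ∀ i, HasDerivAt (fun t => q t i) (p t i / m) t)
    (hp : ∀ t : ℝ, ∀ i, HasDerivAt (fun t => p t i)
      (-k * ∑ j ∈ Finset.univ.filter (fun j => A i j), (q t i - q t j)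
        - k₁ * Real.cos (ω * t)) t) :
    ∀ t : ℝ, HasDerivAt (fun t =>
        (∑ i, (p t i) ^ 2 / (2 * m))
          + (k / 4) * (∑ i, ∑ j ∈ Finset.univ.filter (fun j => A i j), (q t i - q t j) ^ 2)
          + k₁ * Real.cos (ω * t) * ∑ i, q t i)
      (-(ω * k₁ * Real.sin (ω * t)) * ∑ i, q t i) t := by
  intro t
  have hkin : HasDerivAt (fun t => ∑ i, (p t i) ^ 2 / (2 * m))
      (∑ i, (p t i / m) * (-k * ∑ j ∈ Finset.univ.filter (fun j => A i j), (q t i - q t j)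
        - k₁ * Real.cos (ω * t))) t := by
    refine HasDerivAt.fun_sum fun i _ => ?_
    refine (((hp t i).fun_pow 2).div_const (2 * m)).congr_deriv ?_
    field_simp
    norm_num
    ring
  have hspring : HasDerivAt
      (fun t => ∑ i, ∑ j ∈ Finset.univ.filter (fun j => A i j), (q t i - q t j) ^ 2)
      (2 * ∑ i, ∑ j ∈ Finset.univ.filter (fun j => A i j),
        (q t i - q t j) * (p t i / m - p t j / m)) t := by
    simp only [Finset.mul_sum]
    refine HasDerivAt.fun_sum fun i _ => HasDerivAt.fun_sum fun j _ => ?_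
    refine (((hq t i).fun_sub (hq t j)).fun_pow 2).congr_deriv ?_
    norm_num
    ring
  have hcos : HasDerivAt (fun t => k₁ * Real.cos (ω * t)) (-(ω * k₁ * Real.sin (ω * t))) t := by
    refine (((hasDerivAt_id t).const_mul ω).cos.const_mul k₁).congr_deriv ?_
    simp only [id]
    ring
  have hsum : HasDerivAt (fun t => ∑ i, q t i) (∑ i, p t i / m) t :=
    HasDerivAt.fun_sum fun i _ => hq t i
  refine ((hkin.fun_add (hspring.const_mul (k / 4))).fun_add (hcos.fun_mul hsum)).congr_deriv ?_
  rw [sum_adj_diff_mul_diff A hA (q t) (fun i => p t i / m)]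
  have hsplit : ∑ i, (p t i / m) *
        (-k * ∑ j ∈ Finset.univ.filter (fun j => A i j), (q t i - q t j) - k₁ * Real.cos (ω * t))
      = -k * ∑ i, (p t i / m) * ∑ j ∈ Finset.univ.filter (fun j => A i j), (q t i - q t j)
        - k₁ * Real.cos (ω * t) * ∑ i, p t i / m := by
    rw [Finset.mul_sum, Finset.mul_sum, ← Finset.sum_sub_distrib]
    exact Finset.sum_congr rfl fun i _ => by ring
  rw [hsplit]
  ring
end

section
/- Let N ∈ ℕ, let A : Fin N → Fin N → Prop be a relation, let m > 0 and k, k₁, ω ∈ ℝ, and let q, p : ℝ → Fin N → ℝ be such that for every t ∈ ℝ and every i, the function t ↦ q t i has derivative p t i / m at t, and the function t ↦ p t i has derivative −k · ∑_{j with A i j} (q t i − q t j) − k₁·cos(ω·t) at t. Define the time-reversed trajectory q̃ t i = q (−t) i and p̃ t i = −p (−t) i. Then (q̃, p̃) satisfies the same equations: for every t ∈ ℝ and every i, t ↦ q̃ t i has derivative p̃ t i / m at t, and t ↦ p̃ t i has derivative −k · ∑_{j with A i j} (q̃ t i − q̃ t j) − k₁·cos(ω·t) at t. -/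
/-- Time-reversal symmetry of the forced spring system: if `(q, p)` is a solution of
`dqᵢ/dt = pᵢ/m`, `dpᵢ/dt = −k·∑_{j ∈ Nᵢ}(qᵢ − qⱼ) − k₁·cos(ωt)`, then the time-reversed
trajectory `q̃ t i = q (−t) i`, `p̃ t i = −p (−t) i` is again a solution of the same
equations. -/
theorem forced_spring_time_reversal (N : ℕ)
    (A : Fin N → Fin N → Prop) [DecidableRel A]
    (m : ℝ) (hm : 0 < m) (k k₁ ω : ℝ)
    (q p : ℝ → Fin N → ℝ)
    (hq : ∀ t : ℝ, ∀ i, HasDerivAt (fun t => q t i) (p t i / m) t)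
    (hp : ∀ t : ℝ, ∀ i, HasDerivAt (fun t => p t i)
      (-k * ∑ j ∈ Finset.univ.filter (fun j => A i j), (q t i - q t j)
        - k₁ * Real.cos (ω * t)) t) :
    (∀ t : ℝ, ∀ i, HasDerivAt (fun t => q (-t) i) ((-p (-t) i) / m) t) ∧
    (∀ t : ℝ, ∀ i, HasDerivAt (fun t => -p (-t) i)
      (-k * ∑ j ∈ Finset.univ.filter (fun j => A i j), (q (-t) i - q (-t) j)
        - k₁ * Real.cos (ω * t)) t) := by
  refine ⟨fun t i => ?_, fun t i => ?_⟩
  · have h := (hq (-t) i).scomp t (hasDerivAt_neg t)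
    refine h.congr_deriv ?_
    simp [neg_div]
  · have h := ((hp (-t) i).scomp t (hasDerivAt_neg t)).neg
    refine h.congr_deriv ?_
    -- The two sign changes cancel, and the force is even in time.
    rw [mul_neg, Real.cos_neg, neg_one_smul, neg_neg]
end

section
/- Let N ∈ ℕ, let m > 0, k₀ ∈ ℝ, and γ ≠ 0, and let q, p : ℝ → Fin N → ℝ be such that for every t ∈ ℝ and every i, the function t ↦ q t i has derivative p t i / m at t, and the function t ↦ p t i has derivative −k₀ · q t i − (γ/m) · p t i at t. Suppose moreover that the time-reversed trajectory q̃ t i = q (−t) i, p̃ t i = −p (−t) i also satisfies the same equations, i.e. for every t ∈ ℝ and every i, t ↦ q̃ t i has derivative p̃ t i / m at t and t ↦ p̃ t i has derivative −k₀ · q̃ t i − (γ/m) · p̃ t i at t. Then p t i = 0 for all t ∈ ℝ and all i. -/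
/-- Irreversibility of the damped spring system: if `(q, p)` solves
`dqᵢ/dt = pᵢ/m`, `dpᵢ/dt = −k₀·qᵢ − (γ/m)·pᵢ` with `γ ≠ 0`, and the time-reversed
trajectory `q̃ t i = q (−t) i`, `p̃ t i = −p (−t) i` also solves the same equations,
then the momentum vanishes identically. -/
theorem damped_spring_irreversible (N : ℕ)
    (m : ℝ) (hm : 0 < m) (k₀ γ : ℝ) (hγ : γ ≠ 0)
    (q p : ℝ → Fin N → ℝ)
    (hq : ∀ t : ℝ, ∀ i, HasDerivAt (fun t => q t i) (p t i / m) t)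
    (hp : ∀ t : ℝ, ∀ i, HasDerivAt (fun t => p t i)
      (-k₀ * q t i - (γ / m) * p t i) t)
    (hq' : ∀ t : ℝ, ∀ i, HasDerivAt (fun t => q (-t) i) ((-p (-t) i) / m) t)
    (hp' : ∀ t : ℝ, ∀ i, HasDerivAt (fun t => -p (-t) i)
      (-k₀ * q (-t) i - (γ / m) * (-p (-t) i)) t) :
    ∀ t : ℝ, ∀ i, p t i = 0 := by
  intro t i
  -- By the chain rule, the derivative of `s ↦ -p (-s) i` at `-t` is that of `p` at `t`; the reversed
  -- equation gives the same value with the friction term's sign flipped.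
  have h : HasDerivAt (fun s => -p (-s) i) (-k₀ * q t i - (γ / m) * p t i) (-t) := by
    have hpt := hp (- -t) i
    have hc := (hpt.scomp (-t) (hasDerivAt_neg (-t))).neg
    rw [neg_neg, neg_one_smul, neg_neg] at hc
    exact hc
  have e := h.unique (hp' (-t) i)
  rw [neg_neg] at e
  have hz : (γ / m) * p t i = 0 := by linarith
  exact (mul_eq_zero.mp hz).resolve_left (div_ne_zero hγ hm.ne')
end
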